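/- arXiv:gr-qc/0507042 — 3 statements merged into one kernel-verified Lean document; each statement's English description precedes it below -/
import Mathlib

section
/- There is a constant C > 0 such that for all e₁, e₂ ∈ (0, 2/3] and every f ∈ L¹₂(ℝ³): |ρ(e₁,f) − ρ(e₂,f)| ≤ (C/(e₁⁴ e₂⁶)) ‖f‖ |e₁ − e₂|. -/
open MeasureTheory Real

noncomputable section

/-- Momentum space `ℝ³`. -/
abbrev R3 := EuclideanSpace ℝ (Fin 3)

/-- The surface measure on the unit sphere `S²` of `ℝ³`. -/
def sphMeasure : Measure (Metric.sphere (0:R3) 1) := (volume : Measure R3).toSphere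

/-- `p⁰ = √(1 + a²|p̄|²)`. -/
def pZero (a : ℝ) (p : R3) : ℝ := Real.sqrt (1 + a ^ 2 * ‖p‖ ^ 2)

/-- The function `b(p̄, q̄, ω)` of the collision law (Glassey's formula on RW space-time). -/
def collb (a : ℝ) (p q : R3) (ω : R3) : ℝ :=
  2 * pZero a p * pZero a q * (pZero a p + pZero a q) * a ^ 2 *
    (inner ℝ ω ((pZero a q)⁻¹ • q - (pZero a p)⁻¹ • p) : ℝ) /
    ((pZero a p + pZero a q) ^ 2 - a ^ 4 * (inner ℝ ω (p + q) : ℝ) ^ 2)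

/-- Post-collision momentum `p̄' = p̄ + b ω`. -/
def pColl (a : ℝ) (p q : R3) (ω : R3) : R3 := p + collb a p q ω • ω

/-- Post-collision momentum `q̄' = q̄ - b ω`. -/
def qColl (a : ℝ) (p q : R3) (ω : R3) : R3 := q - collb a p q ω • ω

/-- A collision kernel is a function `A(a, p̄, q̄, p̄', q̄')`. -/
abbrev Kernel := ℝ → R3 → R3 → R3 → R3 → ℝ

/-- Boundedness assumption `0 ≤ A ≤ C₁`. -/
def KernelBounded (A : Kernel) (C₁ : ℝ) : Prop :=
  ∀ a p q p' q', 0 ≤ A a p q p' q' ∧ A a p q p' q' ≤ C₁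

/-- First symmetry assumption `A(a,p̄,q̄,p̄',q̄') = A(a,q̄,p̄,q̄',p̄')`. -/
def KernelSymm₁ (A : Kernel) : Prop :=
  ∀ a p q p' q', A a p q p' q' = A a q p q' p'

/-- Second symmetry assumption `A(a,p̄,q̄,p̄',q̄') = A(a,p̄',q̄',p̄,q̄)`. -/
def KernelSymm₂ (A : Kernel) : Prop :=
  ∀ a p q p' q', A a p q p' q' = A a p' q' p q

/-- Lipschitz continuity of the kernel in the parameter `a`. -/
def KernelLip (A : Kernel) (γ : ℝ) : Prop :=
  ∀ a₁ a₂ p q p' q', |A a₁ p q p' q' - A a₂ p q p' q'| ≤ γ * |a₁ - a₂|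

/-- Gain term `Q⁺(f,g)(p̄)` of the collision operator, with parameter `a`. -/
def Qplus (A : Kernel) (a : ℝ) (f g : R3 → ℝ) (p : R3) : ℝ :=
  ∫ q : R3, (a ^ 3 / pZero a q) *
    ∫ ω : Metric.sphere (0:R3) 1,
      f (pColl a p q ω) * g (qColl a p q ω) *
        A a p q (pColl a p q ω) (qColl a p q ω) ∂sphMeasure

/-- Loss term `Q⁻(f,g)(p̄)` of the collision operator, with parameter `a`. -/
def Qminus (A : Kernel) (a : ℝ) (f g : R3 → ℝ) (p : R3) : ℝ :=
  ∫ q : R3, (a ^ 3 / pZero a q) *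
    ∫ ω : Metric.sphere (0:R3) 1,
      f p * g q * A a p q (pColl a p q ω) (qColl a p q ω) ∂sphMeasure

/-- The collision operator `Q = Q⁺ - Q⁻`. -/
def Qcoll (A : Kernel) (a : ℝ) (f g : R3 → ℝ) (p : R3) : ℝ :=
  Qplus A a f g p - Qminus A a f g p

/-- The weight `√(1+|p̄|²)`. -/
def wt (p : R3) : ℝ := Real.sqrt (1 + ‖p‖ ^ 2)

/-- The norm of the weighted space `L¹₂(ℝ³)`. -/
def L12norm (f : R3 → ℝ) : ℝ := ∫ p : R3, wt p * |f p|

/-- Membership in the weighted space `L¹₂(ℝ³)`. -/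
def MemL12 (f : R3 → ℝ) : Prop :=
  AEStronglyMeasurable f (volume : Measure R3) ∧
    Integrable (fun p => wt p * |f p|) (volume : Measure R3)

/-- Membership in `X_r = {f ∈ L¹₂ : f ≥ 0 a.e., ‖f‖ ≤ r}`. -/
def MemXr (r : ℝ) (f : R3 → ℝ) : Prop :=
  MemL12 f ∧ (∀ᵐ p : R3, 0 ≤ f p) ∧ L12norm f ≤ r

/-- Continuity of a curve `t ↦ f t` with values in `L¹₂(ℝ³)`, on a set `I` of times. -/
def ContL12 (I : Set ℝ) (f : ℝ → R3 → ℝ) : Prop :=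
  ∀ t ∈ I, ∀ ε > 0, ∃ δ > 0, ∀ s ∈ I, |s - t| < δ →
    L12norm (fun p => f s p - f t p) < ε

/-- The Boltzmann integral equation on `[t₀, t₀+T]` with expansion factor `a`,
collision kernel `A` and initial datum `f₀`. -/
def SolvesBoltzmann (A : Kernel) (a : ℝ → ℝ) (t₀ T : ℝ) (f₀ : R3 → ℝ)
    (f : ℝ → R3 → ℝ) : Prop :=
  ∀ t ∈ Set.Icc (0:ℝ) T,
    f (t₀ + t) =ᵐ[(volume : Measure R3)] fun p =>
      f₀ p + ∫ s in t₀..(t₀ + t), (pZero (a s) p)⁻¹ * Qcoll A (a s) (f s) (f s) p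

/-- Action of a `3 × 3` matrix on `ℝ³`. -/
def rotv (M : Matrix (Fin 3) (Fin 3) ℝ) (p : R3) : R3 := WithLp.toLp 2 (M.mulVec p)

/-- Rotation invariance of the collision kernel under `SO(3)`. -/
def KernelRot (A : Kernel) : Prop :=
  ∀ M ∈ Matrix.orthogonalGroup (Fin 3) ℝ, M.det = 1 →
    ∀ a p q p' q', A a (rotv M p) (rotv M q) (rotv M p') (rotv M q') = A a p q p' q'

/-- The density `ρ(e, f) = e⁻³ ∫ √(1 + |p̄|²/e²) f(p̄) dp̄`. -/
def rhoD (e : ℝ) (f : R3 → ℝ) : ℝ :=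
  (1 / e ^ 3) * ∫ p : R3, Real.sqrt (1 + ‖p‖ ^ 2 / e ^ 2) * f p

/-- The pressure `P(e, f) = e⁻⁵ ∫ (p¹)² (1 + |p̄|²/e²)^{-1/2} f(p̄) dp̄`. -/
def PD (e : ℝ) (f : R3 → ℝ) : ℝ :=
  (1 / e ^ 5) * ∫ p : R3, (p 0) ^ 2 * (Real.sqrt (1 + ‖p‖ ^ 2 / e ^ 2))⁻¹ * f p

/-- The component `T⁰⁰ = a³ ∫ √(1 + a²|p̄|²) g(p̄) dp̄` of the stress-matter tensor. -/
def Tup00 (a : ℝ) (g : R3 → ℝ) : ℝ :=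
  a ^ 3 * ∫ p : R3, Real.sqrt (1 + a ^ 2 * ‖p‖ ^ 2) * g p

/-- The component `T¹¹ = a³ ∫ (p¹)² g(p̄) (1 + a²|p̄|²)^{-1/2} dp̄` of the stress-matter tensor. -/
def Tup11 (a : ℝ) (g : R3 → ℝ) : ℝ :=
  a ^ 3 * ∫ p : R3, (p 0) ^ 2 * g p / Real.sqrt (1 + a ^ 2 * ‖p‖ ^ 2)

/-- `a` (positive, twice differentiable, with first and second derivatives `a₁`, `a₂` on
`[0, l]`) solves the Einstein evolution equation with cosmological constant `Λ` and sources
generated by the distribution function `f`. -/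
def EinsteinEvol (Λ l : ℝ) (f : ℝ → R3 → ℝ) (a a₁ a₂ : ℝ → ℝ) : Prop :=
  (∀ t ∈ Set.Icc (0:ℝ) l, 0 < a t) ∧
  (∀ t ∈ Set.Icc (0:ℝ) l, HasDerivWithinAt a (a₁ t) (Set.Icc (0:ℝ) l) t) ∧
  (∀ t ∈ Set.Icc (0:ℝ) l, HasDerivWithinAt a₁ (a₂ t) (Set.Icc (0:ℝ) l) t) ∧
  (∀ t ∈ Set.Icc (0:ℝ) l,
    a₂ t / a t = -(4 * π / 3) * (Tup00 (a t) (f t) + 3 * a t ^ 2 * Tup11 (a t) (f t)) + Λ / 3)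

end

theorem aux_weight_eq (e n : ℝ) (he : 0 < e) :
    1 / e ^ 3 * Real.sqrt (1 + n ^ 2 / e ^ 2) = Real.sqrt (e ^ 2 + n ^ 2) / e ^ 4 := by
  have h : 1 + n ^ 2 / e ^ 2 = (e ^ 2 + n ^ 2) / e ^ 2 := by field_simp
  rw [h, Real.sqrt_div (by positivity), Real.sqrt_sq he.le]
  field_simp

theorem aux_sqrt_lip (a b n : ℝ) (ha : 0 < a) (hb : 0 < b) :
    |Real.sqrt (a ^ 2 + n ^ 2) - Real.sqrt (b ^ 2 + n ^ 2)| ≤ |a - b| := by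
  have h1 := Real.sq_sqrt (show 0 ≤ a ^ 2 + n ^ 2 by positivity)
  have h2 := Real.sq_sqrt (show 0 ≤ b ^ 2 + n ^ 2 by positivity)
  have h3 : a ≤ Real.sqrt (a ^ 2 + n ^ 2) := Real.le_sqrt_of_sq_le (by nlinarith [sq_nonneg n])
  have h4 : b ≤ Real.sqrt (b ^ 2 + n ^ 2) := Real.le_sqrt_of_sq_le (by nlinarith [sq_nonneg n])
  set s := Real.sqrt (a ^ 2 + n ^ 2)
  set t := Real.sqrt (b ^ 2 + n ^ 2)
  have h5 : |s - t| * (s + t) = |a - b| * (a + b) := by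
    rw [← abs_of_pos (show 0 < s + t by linarith), ← abs_of_pos (show 0 < a + b by linarith),
      ← abs_mul, ← abs_mul]
    congr 1
    nlinarith
  have h6 : |a - b| * (a + b) ≤ |a - b| * (s + t) :=
    mul_le_mul_of_nonneg_left (by linarith) (abs_nonneg _)
  exact le_of_mul_le_mul_right (h5.trans_le h6) (by linarith)

theorem aux_pointwise (a b n : ℝ) (ha : 0 < a) (ha' : a ≤ 1) (hb : 0 < b) (hb' : b ≤ 1) :
    |1 / a ^ 3 * Real.sqrt (1 + n ^ 2 / a ^ 2) - 1 / b ^ 3 * Real.sqrt (1 + n ^ 2 / b ^ 2)|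
      ≤ 5 / (a ^ 4 * b ^ 6) * |a - b| * Real.sqrt (1 + n ^ 2) := by
  rw [aux_weight_eq a n ha, aux_weight_eq b n hb]
  have hl := aux_sqrt_lip a b n ha hb
  have hw : 1 ≤ Real.sqrt (1 + n ^ 2) := Real.one_le_sqrt.2 (by nlinarith [sq_nonneg n])
  have hs : Real.sqrt (a ^ 2 + n ^ 2) ≤ Real.sqrt (1 + n ^ 2) :=
    Real.sqrt_le_sqrt (by nlinarith)
  have hs0 := Real.sqrt_nonneg (a ^ 2 + n ^ 2)
  set s := Real.sqrt (a ^ 2 + n ^ 2)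
  set t := Real.sqrt (b ^ 2 + n ^ 2)
  set w := Real.sqrt (1 + n ^ 2)
  have key : s / a ^ 4 - t / b ^ 4 =
      (b ^ 2 * ((b - a) * ((b + a) * (b ^ 2 + a ^ 2)) * s) + b ^ 2 * a ^ 4 * (s - t))
        / (a ^ 4 * b ^ 6) := by
    field_simp
    ring
  rw [key, abs_div, abs_of_pos (show 0 < a ^ 4 * b ^ 6 by positivity), div_mul_eq_mul_div,
    div_mul_eq_mul_div]
  refine div_le_div_of_nonneg_right ?_ (by positivity)
  have ha2 : a ^ 2 ≤ 1 := pow_le_one₀ ha.le ha'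
  have hb2 : b ^ 2 ≤ 1 := pow_le_one₀ hb.le hb'
  have ha4 : a ^ 4 ≤ 1 := pow_le_one₀ ha.le ha'
  have hd := abs_nonneg (a - b)
  have e1 : |b ^ 2 * ((b - a) * ((b + a) * (b ^ 2 + a ^ 2)) * s)| ≤ 4 * |a - b| * w := by
    have : |b ^ 2 * ((b - a) * ((b + a) * (b ^ 2 + a ^ 2)) * s)|
        = b ^ 2 * ((b + a) * (b ^ 2 + a ^ 2)) * |a - b| * s := by
      rw [abs_mul, abs_mul, abs_mul, abs_of_nonneg hs0, abs_sub_comm b a,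
        abs_of_pos (show 0 < b ^ 2 by positivity),
        abs_of_pos (show 0 < (b + a) * (b ^ 2 + a ^ 2) by positivity)]
      ring
    rw [this]
    have h2 : (b + a) * (b ^ 2 + a ^ 2) ≤ 2 * 2 :=
      mul_le_mul (by linarith) (by linarith) (by positivity) (by norm_num)
    have h3 : b ^ 2 * ((b + a) * (b ^ 2 + a ^ 2)) ≤ 1 * (2 * 2) :=
      mul_le_mul hb2 h2 (by positivity) (by norm_num)
    have h4 : b ^ 2 * ((b + a) * (b ^ 2 + a ^ 2)) ≤ 4 := by linarith
    gcongr
  have e2 : |b ^ 2 * a ^ 4 * (s - t)| ≤ |a - b| * w := by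
    rw [abs_mul, abs_of_pos (show 0 < b ^ 2 * a ^ 4 by positivity)]
    calc b ^ 2 * a ^ 4 * |s - t| ≤ 1 * |s - t| := by
          gcongr
          exact mul_le_one₀ hb2 (by positivity) ha4
      _ ≤ |a - b| * 1 := by linarith
      _ ≤ |a - b| * w := by gcongr
  calc _ ≤ _ := abs_add_le _ _
    _ ≤ 4 * |a - b| * w + |a - b| * w := add_le_add e1 e2
    _ = _ := by ring

theorem aux_integrable (e : ℝ) (he : 0 < e) (he' : e ≤ 1) (f : R3 → ℝ) (hf : MemL12 f) :
    Integrable (fun p : R3 => 1 / e ^ 3 * (Real.sqrt (1 + ‖p‖ ^ 2 / e ^ 2) * f p)) := by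
  refine Integrable.mono' (hf.2.const_mul (1 / e ^ 4)) ?_ ?_
  · refine AEStronglyMeasurable.const_mul (AEStronglyMeasurable.mul ?_ hf.1) _
    exact Continuous.aestronglyMeasurable (by fun_prop)
  · refine Filter.Eventually.of_forall fun p => ?_
    rw [← mul_assoc, aux_weight_eq e ‖p‖ he, norm_mul, Real.norm_eq_abs, Real.norm_eq_abs,
      abs_of_nonneg (by positivity), ← mul_assoc, wt, div_eq_mul_one_div, mul_comm (√_)]
    have : e ^ 2 ≤ 1 := pow_le_one₀ he.le he'
    gcongr

/-- Lipschitz estimate in `e` for the density `ρ(e, f)`. -/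
theorem density_lipschitz :
    ∃ C : ℝ, 0 < C ∧ ∀ e₁ ∈ Set.Ioc (0:ℝ) (2/3), ∀ e₂ ∈ Set.Ioc (0:ℝ) (2/3),
      ∀ f : R3 → ℝ, MemL12 f →
        |rhoD e₁ f - rhoD e₂ f| ≤ C / (e₁ ^ 4 * e₂ ^ 6) * L12norm f * |e₁ - e₂| := by
  refine ⟨5, by norm_num, ?_⟩
  rintro a ⟨ha, ha'⟩ b ⟨hb, hb'⟩ f hf
  have ha1 : a ≤ 1 := by linarith
  have hb1 : b ≤ 1 := by linarith
  unfold rhoD L12norm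
  rw [← integral_const_mul, ← integral_const_mul,
    ← integral_sub (aux_integrable a ha ha1 f hf) (aux_integrable b hb hb1 f hf),
    mul_right_comm, ← integral_const_mul, ← Real.norm_eq_abs]
  refine norm_integral_le_of_norm_le (hf.2.const_mul _) (Filter.Eventually.of_forall fun p => ?_)
  rw [← mul_assoc, ← mul_assoc, ← sub_mul, norm_mul, Real.norm_eq_abs, Real.norm_eq_abs,
    ← mul_assoc]
  exact mul_le_mul_of_nonneg_right (aux_pointwise a b ‖p‖ ha ha1 hb hb1) (abs_nonneg _)
end

section
/- There is a constant C > 0 such that for all e₁, e₂ ∈ (0, 2/3] and every f ∈ L¹₂(ℝ³): |P(e₁,f) − P(e₂,f)| ≤ (C/(e₁⁴ e₂⁷)) ‖f‖ |e₁ − e₂|. -/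
open MeasureTheory Real

lemma aux_sqrt (e r : ℝ) (he : 0 < e) :
    (Real.sqrt (1 + r ^ 2 / e ^ 2))⁻¹ = e / Real.sqrt (e ^ 2 + r ^ 2) := by
  have h : 1 + r ^ 2 / e ^ 2 = (e ^ 2 + r ^ 2) / e ^ 2 := by field_simp
  rw [h, Real.sqrt_div (by positivity), Real.sqrt_sq he.le, inv_div]

lemma aux_bound (e r x : ℝ) (he : 0 < e) (he' : e ≤ 1) (hx : x ^ 2 ≤ r ^ 2) (hr : 0 ≤ r) :
    |x ^ 2 * (Real.sqrt (1 + r ^ 2 / e ^ 2))⁻¹| ≤ Real.sqrt (1 + r ^ 2) := by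
  rw [aux_sqrt e r he, abs_of_nonneg (by positivity)]
  have hs : r ≤ Real.sqrt (e ^ 2 + r ^ 2) := Real.le_sqrt_of_sq_le (by nlinarith)
  have hw : r ≤ Real.sqrt (1 + r ^ 2) := Real.le_sqrt_of_sq_le (by nlinarith)
  have hs0 : 0 < Real.sqrt (e ^ 2 + r ^ 2) := Real.sqrt_pos.mpr (by positivity)
  rw [← mul_div_assoc, div_le_iff₀ hs0]
  calc x ^ 2 * e ≤ r ^ 2 * 1 := by gcongr
    _ = r * r := by ring
    _ ≤ _ := by gcongr

lemma aux_diff (a b r x : ℝ) (ha : 0 < a) (ha' : a ≤ 1) (hb : 0 < b) (hb' : b ≤ 1)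
    (hx : x ^ 2 ≤ r ^ 2) (hr : 0 ≤ r) :
    |1 / a ^ 5 * (x ^ 2 * (Real.sqrt (1 + r ^ 2 / a ^ 2))⁻¹)
      - 1 / b ^ 5 * (x ^ 2 * (Real.sqrt (1 + r ^ 2 / b ^ 2))⁻¹)|
      ≤ 5 / (a ^ 4 * b ^ 7) * |a - b| * Real.sqrt (1 + r ^ 2) := by
  rw [aux_sqrt a r ha, aux_sqrt b r hb]
  have hw : r ≤ Real.sqrt (1 + r ^ 2) := Real.le_sqrt_of_sq_le (by nlinarith)
  have hw1 : 1 ≤ Real.sqrt (1 + r ^ 2) := Real.le_sqrt_of_sq_le (by nlinarith)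
  set w := Real.sqrt (1 + r ^ 2)
  have hs : r ≤ Real.sqrt (a ^ 2 + r ^ 2) := Real.le_sqrt_of_sq_le (by nlinarith)
  have ht : r ≤ Real.sqrt (b ^ 2 + r ^ 2) := Real.le_sqrt_of_sq_le (by nlinarith)
  have hsa : a ≤ Real.sqrt (a ^ 2 + r ^ 2) := Real.le_sqrt_of_sq_le (by nlinarith)
  have htb : b ≤ Real.sqrt (b ^ 2 + r ^ 2) := Real.le_sqrt_of_sq_le (by nlinarith)
  have hs2 : Real.sqrt (a ^ 2 + r ^ 2) ^ 2 = a ^ 2 + r ^ 2 := Real.sq_sqrt (by positivity)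
  have ht2 : Real.sqrt (b ^ 2 + r ^ 2) ^ 2 = b ^ 2 + r ^ 2 := Real.sq_sqrt (by positivity)
  set s := Real.sqrt (a ^ 2 + r ^ 2)
  set t := Real.sqrt (b ^ 2 + r ^ 2)
  have hs0 : 0 < s := by linarith
  have ht0 : 0 < t := by linarith
  have hst : |t - s| ≤ |a - b| := by
    have h1 : (t - s) * (t + s) = (b - a) * (a + b) := by nlinarith
    have h2 : |t - s| * (t + s) = |a - b| * (a + b) := by
      rw [← abs_of_pos (show 0 < t + s by linarith), ← abs_mul, h1, abs_mul, abs_sub_comm b a,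
        abs_of_pos (show 0 < a + b by linarith)]
    have h3 : |a - b| * (a + b) ≤ |a - b| * (t + s) := by gcongr |a - b| * ?_; linarith
    exact le_of_mul_le_mul_right (h2 ▸ h3) (by linarith)
  have h4 : |b ^ 4 - a ^ 4| ≤ 4 * |a - b| := by
    have : b ^ 4 - a ^ 4 = (b ^ 3 + b ^ 2 * a + b * a ^ 2 + a ^ 3) * (b - a) := by ring
    rw [this, abs_mul, abs_sub_comm b a, abs_of_pos (by positivity)]
    gcongr
    have i1 : b ^ 3 ≤ 1 := pow_le_one₀ hb.le hb'
    have i2 : b ^ 2 * a ≤ 1 := mul_le_one₀ (pow_le_one₀ hb.le hb') ha.le ha'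
    have i3 : b * a ^ 2 ≤ 1 := mul_le_one₀ hb' (by positivity) (pow_le_one₀ ha.le ha')
    have i4 : a ^ 3 ≤ 1 := pow_le_one₀ ha.le ha'
    linarith
  have key : 1 / a ^ 5 * (x ^ 2 * (a / s)) - 1 / b ^ 5 * (x ^ 2 * (b / t))
      = (x ^ 2 * b ^ 4 * (t - s) + x ^ 2 * s * (b ^ 4 - a ^ 4)) / (a ^ 4 * b ^ 4 * (s * t)) := by
    field_simp
    ring
  have hx1 : x ^ 2 ≤ s * t := by nlinarith [mul_le_mul hs ht hr hs0.le]
  have hx2 : x ^ 2 ≤ w * t := by nlinarith [mul_le_mul hw ht hr (by linarith)]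
  have hb4 : b ^ 4 ≤ 1 := pow_le_one₀ hb.le hb'
  have n1 : |x ^ 2 * b ^ 4 * (t - s)| ≤ (s * t) * 1 * |a - b| := by
    rw [abs_mul, abs_of_nonneg (by positivity : 0 ≤ x ^ 2 * b ^ 4)]
    gcongr
  have n2 : |x ^ 2 * s * (b ^ 4 - a ^ 4)| ≤ (w * t) * s * (4 * |a - b|) := by
    rw [abs_mul, abs_of_nonneg (by positivity : 0 ≤ x ^ 2 * s)]
    gcongr
  have n3 : (s * t) * 1 * |a - b| ≤ (s * t) * w * |a - b| := by gcongr
  rw [key, abs_div, abs_of_pos (by positivity : 0 < a ^ 4 * b ^ 4 * (s * t))]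
  calc _ ≤ (5 * |a - b| * w * (s * t)) / (a ^ 4 * b ^ 4 * (s * t)) := by
        gcongr
        refine (abs_add_le _ _).trans ?_
        nlinarith
    _ = 5 / (a ^ 4 * b ^ 4) * |a - b| * w := by field_simp
    _ ≤ _ := by
        have : b ^ 7 ≤ b ^ 4 := pow_le_pow_of_le_one hb.le hb' (by norm_num)
        gcongr

lemma aux_coord (p : R3) : (p 0) ^ 2 ≤ ‖p‖ ^ 2 := by
  have h := PiLp.norm_apply_le p 0
  rw [← Real.norm_eq_abs (p 0) |> fun _ => sq_abs (p 0)]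
  exact pow_le_pow_left₀ (abs_nonneg _) h 2

lemma aux_int (e : ℝ) (he : 0 < e) (he' : e ≤ 1) (f : R3 → ℝ) (hf : MemL12 f) :
    Integrable (fun p : R3 => (p 0) ^ 2 * (Real.sqrt (1 + ‖p‖ ^ 2 / e ^ 2))⁻¹ * f p) := by
  refine hf.2.mono' (AEStronglyMeasurable.mul ?_ hf.1) (Filter.Eventually.of_forall fun p => ?_)
  · apply Measurable.aestronglyMeasurable
    fun_prop
  · rw [norm_mul, Real.norm_eq_abs, Real.norm_eq_abs]
    exact mul_le_mul_of_nonneg_right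
      (aux_bound e ‖p‖ (p 0) he he' (aux_coord p) (norm_nonneg p)) (abs_nonneg _)

/-- Lipschitz estimate in `e` for the pressure `P(e, f)`. -/
theorem pressure_lipschitz :
    ∃ C : ℝ, 0 < C ∧ ∀ e₁ ∈ Set.Ioc (0:ℝ) (2/3), ∀ e₂ ∈ Set.Ioc (0:ℝ) (2/3),
      ∀ f : R3 → ℝ, MemL12 f →
        |PD e₁ f - PD e₂ f| ≤ C / (e₁ ^ 4 * e₂ ^ 7) * L12norm f * |e₁ - e₂| := by
  refine ⟨5, by norm_num, ?_⟩
  rintro a ⟨ha, ha'⟩ b ⟨hb, hb'⟩ f hf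
  have ha1 : a ≤ 1 := by linarith
  have hb1 : b ≤ 1 := by linarith
  unfold PD L12norm
  rw [← integral_const_mul, ← integral_const_mul,
    ← integral_sub ((aux_int a ha ha1 f hf).const_mul _) ((aux_int b hb hb1 f hf).const_mul _),
    mul_right_comm, ← integral_const_mul, ← Real.norm_eq_abs (∫ _, _)]
  refine norm_integral_le_of_norm_le (hf.2.const_mul _) (Filter.Eventually.of_forall fun p => ?_)
  have h := mul_le_mul_of_nonneg_right
    (aux_diff a b ‖p‖ (p 0) ha ha1 hb hb1 (aux_coord p) (norm_nonneg p)) (abs_nonneg (f p))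
  rw [← abs_mul] at h
  rw [Real.norm_eq_abs]
  refine le_trans (le_of_eq ?_) (h.trans (le_of_eq ?_))
  · congr 1; ring
  · unfold wt; ring
end

section
/- Let Λ > 0, δ > 0, t₀ ≥ 0, and let f : [t₀, t₀+δ] → L¹₂(ℝ³) be continuous with f(t) ≥ 0 a.e. for each t. Let e, θ : [t₀, t₀+δ] → ℝ be differentiable with e(t) ∈ (0, 2/3] for all t and θ(t₀) ≥ 0, satisfying e'(t) = −θ(t)e(t)/3 and θ'(t) = −θ(t)²/3 − 4π(ρ(e(t),f(t)) + 3P(e(t),f(t))) + Λ on [t₀, t₀+δ]. Then for all t ∈ [0, δ]: (i) θ(t₀+t) ≤ θ(t₀) + Λt; (ii) the function a := 1/e satisfies a(t₀+t) ≤ a(t₀) · exp((θ(t₀)/3 + Λ/3)(t₀+t+1)²). -/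
open MeasureTheory Real

/-- A priori estimates for the Raychaudhuri system: linear bound on
`θ` and exponential bound on `a = 1/e`. -/
theorem raychaudhuri_apriori_estimates
    (Λ δ t₀ : ℝ) (hΛ : 0 < Λ) (hδ : 0 < δ) (ht₀ : 0 ≤ t₀)
    (f : ℝ → R3 → ℝ)
    (hfmem : ∀ t ∈ Set.Icc t₀ (t₀ + δ), MemL12 (f t))
    (hfpos : ∀ t ∈ Set.Icc t₀ (t₀ + δ), ∀ᵐ p : R3, 0 ≤ f t p)
    (hfc : ContL12 (Set.Icc t₀ (t₀ + δ)) f)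
    (e θ : ℝ → ℝ)
    (he_range : ∀ t ∈ Set.Icc t₀ (t₀ + δ), e t ∈ Set.Ioc (0:ℝ) (2/3))
    (hθ0 : 0 ≤ θ t₀)
    (hde : ∀ t ∈ Set.Icc t₀ (t₀ + δ),
      HasDerivWithinAt e (-(θ t) * e t / 3) (Set.Icc t₀ (t₀ + δ)) t)
    (hdθ : ∀ t ∈ Set.Icc t₀ (t₀ + δ),
      HasDerivWithinAt θ
        (-(θ t ^ 2) / 3 - 4 * π * (rhoD (e t) (f t) + 3 * PD (e t) (f t)) + Λ)
        (Set.Icc t₀ (t₀ + δ)) t) :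
    ∀ t ∈ Set.Icc (0:ℝ) δ,
      θ (t₀ + t) ≤ θ t₀ + Λ * t ∧
      (e (t₀ + t))⁻¹ ≤ (e t₀)⁻¹ * Real.exp ((θ t₀ / 3 + Λ / 3) * (t₀ + t + 1) ^ 2) := by
  have hθ' : ∀ t ∈ Set.Icc t₀ (t₀ + δ),
      -(θ t ^ 2) / 3 - 4 * π * (rhoD (e t) (f t) + 3 * PD (e t) (f t)) + Λ ≤ Λ := by
    intro t ht
    have he := (he_range t ht).1
    have h1 : 0 ≤ rhoD (e t) (f t) := by
      unfold rhoD
      refine mul_nonneg (by positivity) (integral_nonneg_of_ae ?_)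
      filter_upwards [hfpos t ht] with p hp
      exact mul_nonneg (Real.sqrt_nonneg _) hp
    have h2 : 0 ≤ PD (e t) (f t) := by
      unfold PD
      refine mul_nonneg (by positivity) (integral_nonneg_of_ae ?_)
      filter_upwards [hfpos t ht] with p hp
      exact mul_nonneg (by positivity) hp
    have h3 : 0 ≤ 4 * π * (rhoD (e t) (f t) + 3 * PD (e t) (f t)) := by positivity
    nlinarith [sq_nonneg (θ t)]
  have ht₀mem : t₀ ∈ Set.Icc t₀ (t₀ + δ) := ⟨le_refl _, by linarith⟩
  have key1 : ∀ s ∈ Set.Icc t₀ (t₀ + δ), θ s ≤ θ t₀ + Λ * (s - t₀) := by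
    have hd : ∀ s ∈ Set.Icc t₀ (t₀ + δ), HasDerivWithinAt (fun s => Λ * (s - t₀) - θ s)
        (Λ * 1 - (-(θ s ^ 2) / 3 - 4 * π * (rhoD (e s) (f s) + 3 * PD (e s) (f s)) + Λ))
        (Set.Icc t₀ (t₀ + δ)) s := fun s hs =>
      (((hasDerivWithinAt_id s _).sub_const t₀).const_mul Λ).sub (hdθ s hs)
    have hm : MonotoneOn (fun s => Λ * (s - t₀) - θ s) (Set.Icc t₀ (t₀ + δ)) := by
      refine monotoneOn_of_hasDerivWithinAt_nonneg (convex_Icc _ _)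
        (fun s hs => (hd s hs).continuousWithinAt)
        (fun s hs => (hd s (interior_subset hs)).mono interior_subset) ?_
      intro s hs
      linarith [hθ' s (interior_subset hs)]
    intro s hs
    have := hm ht₀mem hs hs.1
    simp only [sub_self, mul_zero] at this
    linarith
  have key2 : ∀ s ∈ Set.Icc t₀ (t₀ + δ),
      Real.log (e t₀) ≤ Real.log (e s) + (θ t₀ / 3 * (s - t₀) + Λ / 6 * (s - t₀) ^ 2) := by
    have hd : ∀ s ∈ Set.Icc t₀ (t₀ + δ), HasDerivWithinAt
        (fun s => Real.log (e s) + (θ t₀ / 3 * (s - t₀) + Λ / 6 * (s - t₀) ^ 2))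
        (-(θ s) * e s / 3 / e s + (θ t₀ / 3 * 1 + Λ / 6 * (2 * (s - t₀))))
        (Set.Icc t₀ (t₀ + δ)) s := by
      intro s hs
      have h0 := (hasDerivWithinAt_id s (Set.Icc t₀ (t₀ + δ))).sub_const t₀
      have hp := (h0.pow 2).const_mul (Λ / 6)
      have := ((hde s hs).log (he_range s hs).1.ne').add ((h0.const_mul (θ t₀ / 3)).add hp)
      exact this.congr_deriv (by simp)
    have hm : MonotoneOn
        (fun s => Real.log (e s) + (θ t₀ / 3 * (s - t₀) + Λ / 6 * (s - t₀) ^ 2))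
        (Set.Icc t₀ (t₀ + δ)) := by
      refine monotoneOn_of_hasDerivWithinAt_nonneg (convex_Icc _ _)
        (fun s hs => (hd s hs).continuousWithinAt)
        (fun s hs => (hd s (interior_subset hs)).mono interior_subset) ?_
      intro s hs
      have hs' := interior_subset hs
      have he := (he_range s hs').1
      have : -(θ s) * e s / 3 / e s = -(θ s) / 3 := by field_simp
      rw [this]
      linarith [key1 s hs']
    intro s hs
    have := hm ht₀mem hs hs.1
    simpa using this
  intro t ht
  have hs : t₀ + t ∈ Set.Icc t₀ (t₀ + δ) := ⟨by linarith [ht.1], by linarith [ht.2]⟩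
  have ht0 := ht.1
  refine ⟨by simpa using key1 _ hs, ?_⟩
  have h2 := key2 _ hs
  have he0 := (he_range _ ht₀mem).1
  have he := (he_range _ hs).1
  rw [add_sub_cancel_left] at h2
  have hle : θ t₀ / 3 * t + Λ / 6 * t ^ 2 ≤ (θ t₀ / 3 + Λ / 3) * (t₀ + t + 1) ^ 2 := by
    have ha : t ≤ (t₀ + t + 1) ^ 2 := by nlinarith
    have hb : t ^ 2 / 2 ≤ (t₀ + t + 1) ^ 2 := by nlinarith
    have h3 := mul_le_mul_of_nonneg_left ha (by positivity : 0 ≤ θ t₀ / 3)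
    have h4 := mul_le_mul_of_nonneg_left hb (by positivity : 0 ≤ Λ / 3)
    linarith
  rw [← Real.exp_log (inv_pos.2 he), ← Real.exp_log (inv_pos.2 he0), ← Real.exp_add,
    Real.exp_le_exp, Real.log_inv, Real.log_inv]
  linarith
end
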